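/- Let m be a positive integer, p₁, …, p_m ∈ (1, ∞) with 1/p₁ + ⋯ + 1/p_m < 1, let σ be a bijection of {1, …, m}, and let q₁, …, q_m ∈ (0, ∞) satisfy q_k ≥ δ^{p_{σ(k)}, …, p_{σ(m)}} := 1/(1 − (1/p_{σ(k)} + ⋯ + 1/p_{σ(m)})) for every k = 1, …, m. Then for every bounded nonnegative m-linear form A : ℓ_{p₁} × ⋯ × ℓ_{p_m} → 𝕂 one has the anisotropic inequality ( Σ_{j_{σ(1)}=1}^∞ ( Σ_{j_{σ(2)}=1}^∞ ⋯ ( Σ_{j_{σ(m)}=1}^∞ A(e_{j₁}, …, e_{j_m})^{q_m} )^{q_{m−1}/q_m} ⋯ )^{q₁/q₂} )^{1/q₁} ≤ ‖A‖. -/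

import Mathlib

open scoped ENNReal

noncomputable section

/-- The mixed (anisotropic) iterated `ℓ`-norm: for exponents `q 0, …, q (k-1)` and a
nonnegative function `f` of `k` natural indices,
`mixedNorm q f = (Σ_{j₀} (Σ_{j₁} ⋯ (Σ_{j_{k-1}} f(j)^{q_{k-1}})^{q_{k-2}/q_{k-1}} ⋯ )^{q₀/q₁})^{1/q₀}`,
the sums being taken innermost over the last index. -/
noncomputable def mixedNorm : {k : ℕ} → (Fin k → ℝ) → ((Fin k → ℕ) → ℝ≥0∞) → ℝ≥0∞
  | 0, _, f => f (fun i => i.elim0)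
  | (_ + 1), q, f =>
      (∑' j : ℕ, (mixedNorm (fun i => q i.succ) (fun t => f (Fin.cons j t))) ^ (q 0))
        ^ (1 / q 0)

/-!
Let `a` be the array of coefficients of a positive form bounded by `C` on `ℓ_{p₀} × ⋯ × ℓ_{p_k}`.
Testing the form against a fixed nonnegative `x ∈ ℓ_{p₀}` in the first slot leaves a positive form
in the remaining variables, bounded by `C ‖x‖_{p₀}`, with coefficients `∑ j, x j * a (j, ·)`.
By induction this sum has mixed norm at most `C ‖x‖_{p₀}`. The exponents `δ` decrease from the
outermost to the innermost sum and are at least `1`, so the `r`-th power of the mixed norm is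
superadditive, where `r = δ^{p₁,…,p_k}`. Hence `‖(x j * n j)_j‖_r ≤ C ‖x‖_{p₀}` for every `x`,
where `n j` is the mixed norm of the slice `a (j, ·)`, and the converse of Hölder's inequality with
`1 / r = 1 / δ^{p₀,…,p_k} + 1 / p₀` bounds `n` in `ℓ_{δ^{p₀,…,p_k}}`.
Larger exponents only decrease the mixed norm.
-/

open scoped NNReal

section Sums

variable {ι : Type*}

theorem sum_rpow_le_rpow_sum (s : Finset ι) (f : ι → ℝ≥0∞) {r : ℝ} (hr : 1 ≤ r) :
    ∑ i ∈ s, f i ^ r ≤ (∑ i ∈ s, f i) ^ r := by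
  classical
  induction s using Finset.induction_on with
  | empty => simp
  | insert i s hi ih =>
    rw [Finset.sum_insert hi, Finset.sum_insert hi]
    exact (add_le_add_right ih _).trans (ENNReal.add_rpow_le_rpow_add _ _ hr)

theorem tsum_rpow_le_rpow_tsum (f : ι → ℝ≥0∞) {r : ℝ} (hr : 1 ≤ r) :
    ∑' i, f i ^ r ≤ (∑' i, f i) ^ r := by
  rw [ENNReal.tsum_eq_iSup_sum]
  exact iSup_le fun s => (sum_rpow_le_rpow_sum s f hr).trans <|
    ENNReal.rpow_le_rpow (ENNReal.sum_le_tsum s) (zero_le_one.trans hr)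

theorem rpow_tsum_rpow_anti (f : ι → ℝ≥0∞) {a b : ℝ} (ha : 0 < a) (hab : a ≤ b) :
    (∑' i, f i ^ b) ^ (1 / b) ≤ (∑' i, f i ^ a) ^ (1 / a) := by
  have hb : 0 < b := ha.trans_le hab
  rw [one_div b, ENNReal.rpow_inv_le_iff hb, ← ENNReal.rpow_mul, one_div_mul_eq_div]
  calc ∑' i, f i ^ b = ∑' i, (f i ^ a) ^ (b / a) := by
        simp_rw [← ENNReal.rpow_mul, mul_div_cancel₀ b ha.ne']
    _ ≤ (∑' i, f i ^ a) ^ (b / a) := tsum_rpow_le_rpow_tsum _ ((one_le_div ha).2 hab)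

theorem rpow_sum_rpow_le_of_forall_mul {p q r : ℝ} (h : q.HolderTriple p r) {C : ℝ≥0}
    (F : Finset ι) (n : ι → ℝ≥0)
    (hC : ∀ x : ι → ℝ≥0,
      (∑ j ∈ F, (x j * n j) ^ r) ^ (1 / r) ≤ C * (∑ j ∈ F, x j ^ p) ^ (1 / p)) :
    (∑ j ∈ F, n j ^ q) ^ (1 / q) ≤ C := by
  rcases eq_or_ne (∑ j ∈ F, n j ^ q) 0 with hS | hS
  · simp [hS, h.ne_zero]
  -- Equality in Hölder's inequality forces the choice `x ^ p = n ^ q`.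
  have hxp (j : ι) : (n j ^ (q / p)) ^ p = n j ^ q := by
    rw [← NNReal.rpow_mul, div_mul_cancel₀ _ h.symm.ne_zero]
  have hxr (j : ι) : (n j ^ (q / p) * n j) ^ r = n j ^ q := by
    have hq := h.ne_zero
    have hr := h.ne_zero'
    have hexp : (q / p + 1) * r = q :=
      calc (q / p + 1) * r = q * (1 / q + 1 / p) * r := by field_simp; ring
        _ = q := by rw [h.one_div_add_one_div]; field_simp
    conv_lhs => enter [1, 2]; rw [← NNReal.rpow_one (n j)]
    rw [← NNReal.rpow_add_of_nonneg _ (div_nonneg h.nonneg h.symm.nonneg) zero_le_one,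
      ← NNReal.rpow_mul, hexp]
  have hx := hC fun j => n j ^ (q / p)
  simp only [hxp, hxr] at hx
  rw [← h.one_div_add_one_div, NNReal.rpow_add hS] at hx
  exact le_of_mul_le_mul_right hx (NNReal.rpow_pos (pos_iff_ne_zero.2 hS))

theorem rpow_tsum_rpow_le_of_forall_mul {p q r : ℝ} (h : q.HolderTriple p r) {C : ℝ≥0}
    (n : ι → ℝ≥0∞)
    (hC : ∀ (F : Finset ι) (x : ι → ℝ≥0),
      (∑ j ∈ F, (x j * n j) ^ r) ^ (1 / r) ≤ (C * (∑ j ∈ F, x j ^ p) ^ (1 / p) : ℝ≥0)) :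
    (∑' j, n j ^ q) ^ (1 / q) ≤ C := by
  have hn (j : ι) : n j ≠ ⊤ := by
    have hj := hC {j} 1
    simp only [Finset.sum_singleton, Pi.one_apply, ENNReal.coe_one, one_mul, one_div,
      ENNReal.rpow_rpow_inv h.ne_zero'] at hj
    exact ne_top_of_le_ne_top ENNReal.coe_ne_top hj
  lift n to ι → ℝ≥0 using hn
  rw [one_div, ENNReal.rpow_inv_le_iff h.pos, ENNReal.tsum_eq_iSup_sum]
  refine iSup_le fun F => ?_
  have hF : (∑ j ∈ F, n j ^ q) ^ (1 / q) ≤ C := rpow_sum_rpow_le_of_forall_mul h F n fun x => by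
    have hFx := hC F x
    simpa only [← ENNReal.coe_mul, ← ENNReal.coe_rpow_of_nonneg _ h.nonneg',
      ← ENNReal.ofNNReal_finsetSum, ← ENNReal.coe_rpow_of_nonneg _ h.one_div_nonneg',
      ENNReal.coe_le_coe] using hFx
  rw [one_div, NNReal.rpow_inv_le_iff h.pos] at hF
  simpa only [← ENNReal.coe_rpow_of_nonneg _ h.nonneg, ← ENNReal.ofNNReal_finsetSum,
    ENNReal.coe_le_coe] using hF

theorem sum_piFinset_succ {α M : Type*} [AddCommMonoid M] {k : ℕ} (F : Fin (k + 1) → Finset α)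
    (g : (Fin (k + 1) → α) → M) :
    ∑ t ∈ Fintype.piFinset F, g t =
      ∑ t ∈ Fintype.piFinset (Fin.tail F), ∑ j ∈ F 0, g (Fin.cons j t) := by
  rw [Finset.sum_comm, ← Finset.sum_product']
  exact (Finset.sum_equiv (Fin.consEquiv fun _ => α)
    (fun t => Finset.mem_product.trans
      (Fin.mem_piFinset_iff_zero_tail (f := Fin.cons t.1 t.2) (s := F)).symm)
    fun _ _ => rfl).symm

end Sums

section MixedNorm

variable {k : ℕ}

theorem mixedNorm_succ (q : Fin (k + 1) → ℝ) (f : (Fin (k + 1) → ℕ) → ℝ≥0∞) :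
    mixedNorm q f =
      (∑' j, mixedNorm (Fin.tail q) (fun t => f (Fin.cons j t)) ^ q 0) ^ (1 / q 0) :=
  rfl

theorem mixedNorm_anti_exponent {d q : Fin k → ℝ} (hd : ∀ i, 0 < d i) (hdq : ∀ i, d i ≤ q i)
    (f : (Fin k → ℕ) → ℝ≥0∞) : mixedNorm q f ≤ mixedNorm d f := by
  induction k with
  | zero => rfl
  | succ k ih =>
    have hq0 : 0 < q 0 := (hd 0).trans_le (hdq 0)
    rw [mixedNorm_succ, mixedNorm_succ]
    refine le_trans ?_ (rpow_tsum_rpow_anti _ (hd 0) (hdq 0))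
    gcongr
    exact ih (fun i => hd i.succ) (fun i => hdq i.succ) _

theorem mixedNorm_const_mul {q : Fin k → ℝ} (hq : ∀ i, 0 < q i) (c : ℝ≥0∞)
    (f : (Fin k → ℕ) → ℝ≥0∞) : mixedNorm q (fun t => c * f t) = c * mixedNorm q f := by
  induction k with
  | zero => rfl
  | succ k ih =>
    have hq0 := hq 0
    have htail (i : Fin k) : 0 < Fin.tail q i := hq i.succ
    simp_rw [mixedNorm_succ, ih (q := Fin.tail q) htail,
      ENNReal.mul_rpow_of_nonneg _ _ hq0.le, ENNReal.tsum_mul_left, one_div,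
      ENNReal.mul_rpow_of_nonneg _ _ (inv_nonneg.2 hq0.le), ENNReal.rpow_rpow_inv hq0.ne']

theorem sum_mixedNorm_rpow_le {ι : Type*} {q : Fin k → ℝ} (hq : Antitone q) (hq1 : ∀ i, 1 ≤ q i)
    {r : ℝ} (hr : 1 ≤ r) (hqr : ∀ i, q i ≤ r) (s : Finset ι) (f : ι → (Fin k → ℕ) → ℝ≥0∞) :
    ∑ j ∈ s, mixedNorm q (f j) ^ r ≤ mixedNorm q (fun t => ∑ j ∈ s, f j t) ^ r := by
  induction k generalizing r with
  | zero => exact sum_rpow_le_rpow_sum s _ hr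
  | succ k ih =>
    have hq0 : 0 < q 0 := one_pos.trans_le (hq1 0)
    simp_rw [mixedNorm_succ, ← ENNReal.rpow_mul, one_div_mul_eq_div]
    refine (sum_rpow_le_rpow_sum s _ ((one_le_div hq0).2 (hqr 0))).trans ?_
    rw [← Summable.tsum_finsetSum fun _ _ => ENNReal.summable]
    gcongr with i
    exact ih (fun _ _ h => hq (Fin.succ_le_succ_iff.2 h)) (fun i => hq1 i.succ) (hq1 0)
      (fun i => hq (Fin.zero_le i.succ)) fun j t => f j (Fin.cons i t)

end MixedNorm

section Exponents

variable {ι : Type*} {p : ι → ℝ} {s t : Finset ι}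

theorem sum_one_div_le_sum_one_div (hp : ∀ i, 0 < p i) (hst : s ⊆ t) :
    ∑ i ∈ s, 1 / p i ≤ ∑ i ∈ t, 1 / p i :=
  Finset.sum_le_sum_of_subset_of_nonneg hst fun i _ _ => (one_div_pos.2 (hp i)).le

/-- The exponent `δ^{p_i : i ∈ s} = 1 / (1 - ∑ i ∈ s, 1 / p i)`, that is, the conjugate of the
exponent whose reciprocal is `∑ i ∈ s, 1 / p i`. It is only meaningful when this sum is less
than `1`. -/
def deltaExponent (s : Finset ι) (p : ι → ℝ) : ℝ :=
  1 / (1 - ∑ i ∈ s, 1 / p i)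

theorem deltaExponent_mono (hp : ∀ i, 0 < p i) (hst : s ⊆ t) (ht : ∑ i ∈ t, 1 / p i < 1) :
    deltaExponent s p ≤ deltaExponent t p := by
  have hsum := sum_one_div_le_sum_one_div hp hst
  exact one_div_le_one_div_of_le (sub_pos.2 ht) (sub_le_sub_left hsum 1)

theorem one_le_deltaExponent (hp : ∀ i, 0 < p i) (hs : ∑ i ∈ s, 1 / p i < 1) :
    1 ≤ deltaExponent s p := by
  simpa [deltaExponent] using deltaExponent_mono hp s.empty_subset hs

theorem one_le_deltaExponent_Ici [Fintype ι] [Preorder ι] [LocallyFiniteOrderTop ι]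
    (hp : ∀ i, 0 < p i) (hsum : ∑ i, 1 / p i < 1) (l : ι) :
    1 ≤ deltaExponent (Finset.Ici l) p :=
  one_le_deltaExponent hp <|
    (sum_one_div_le_sum_one_div hp (Finset.subset_univ _)).trans_lt hsum

theorem antitone_deltaExponent_Ici [Fintype ι] [Preorder ι] [LocallyFiniteOrderTop ι]
    (hp : ∀ i, 0 < p i) (hsum : ∑ i, 1 / p i < 1) :
    Antitone fun l => deltaExponent (Finset.Ici l) p := fun _ _ hlm =>
  deltaExponent_mono hp (Finset.Ici_subset_Ici.2 hlm) <|
    (sum_one_div_le_sum_one_div hp (Finset.subset_univ _)).trans_lt hsum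

theorem tail_deltaExponent_Ici {k : ℕ} (p : Fin (k + 1) → ℝ) :
    Fin.tail (fun l => deltaExponent (Finset.Ici l) p) =
      fun l => deltaExponent (Finset.Ici l) (Fin.tail p) := by
  funext l
  simp only [Fin.tail, deltaExponent, Fin.sum_Ici_succ]

theorem holderTriple_deltaExponent_univ_succ {k : ℕ} {p : Fin (k + 1) → ℝ} (hp : 0 < p 0)
    (hsum : ∑ i, 1 / p i < 1) :
    (deltaExponent Finset.univ p).HolderTriple (p 0) (deltaExponent Finset.univ (Fin.tail p)) where
  inv_add_inv_eq_inv := by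
    simp only [deltaExponent, one_div, inv_inv, Fin.sum_univ_succ, Fin.tail]
    ring
  left_pos := one_div_pos.2 (sub_pos.2 hsum)
  right_pos := hp

end Exponents

section PositiveForms

variable {ι κ α : Type*} [Fintype ι] [DecidableEq ι] [Fintype κ] [DecidableEq κ]

/-- The positive multilinear form with coefficients `a` is bounded by `C` on `∏ i, ℓ_{p i}`.
It is tested only on nonnegative finitely supported vectors, the `i`-th one being the restriction
of `x i` to `F i`, so that all sums are finite. -/
def PositiveFormBoundedBy (p : ι → ℝ) (a : (ι → α) → ℝ≥0) (C : ℝ≥0) : Prop :=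
  ∀ (F : ι → Finset α) (x : ι → α → ℝ≥0),
    ∑ t ∈ Fintype.piFinset F, a t * ∏ i, x i (t i) ≤
      C * ∏ i, (∑ j ∈ F i, x i j ^ p i) ^ (1 / p i)

theorem PositiveFormBoundedBy.comp_equiv {p : ι → ℝ} {a : (ι → α) → ℝ≥0} {C : ℝ≥0}
    (h : PositiveFormBoundedBy p a C) (σ : κ ≃ ι) :
    PositiveFormBoundedBy (p ∘ σ) (fun t => a (t ∘ σ.symm)) C := by
  intro F x
  have hsum : ∑ t ∈ Fintype.piFinset F, a (t ∘ σ.symm) * ∏ i, x i (t i) =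
      ∑ t ∈ Fintype.piFinset (F ∘ σ.symm), a t * ∏ i, x (σ.symm i) (t i) := by
    refine Finset.sum_equiv (σ.arrowCongr (Equiv.refl α)) (fun t => ?_) fun t _ => ?_
    · simp [← σ.forall_congr_right]
    · rw [← Equiv.prod_comp σ.symm]
      rfl
  have hprod := Equiv.prod_comp σ fun i =>
    (∑ j ∈ F (σ.symm i), x (σ.symm i) j ^ p i) ^ (1 / p i)
  simp only [Equiv.symm_apply_apply] at hprod
  rw [hsum]
  exact (h _ _).trans_eq (congrArg (C * ·) hprod.symm)

theorem PositiveFormBoundedBy.sum_cons {k : ℕ} {p : Fin (k + 1) → ℝ}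
    {a : (Fin (k + 1) → α) → ℝ≥0} {C : ℝ≥0} (h : PositiveFormBoundedBy p a C)
    (F : Finset α) (x : α → ℝ≥0) :
    PositiveFormBoundedBy (Fin.tail p) (fun t => ∑ j ∈ F, x j * a (Fin.cons j t))
      (C * (∑ j ∈ F, x j ^ p 0) ^ (1 / p 0)) := by
  intro G y
  have hcons := h (Fin.cons F G) (Fin.cons x y)
  simp only [sum_piFinset_succ, Fin.prod_univ_succ, Fin.cons_zero, Fin.cons_succ, Fin.tail_cons]
    at hcons
  rw [mul_assoc]
  refine le_of_eq_of_le (Finset.sum_congr rfl fun t _ => ?_) hcons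
  rw [Finset.sum_mul]
  exact Finset.sum_congr rfl fun j _ => by ring

theorem PositiveFormBoundedBy.mixedNorm_deltaExponent_le {k : ℕ} {p : Fin k → ℝ}
    {a : (Fin k → ℕ) → ℝ≥0} {C : ℝ≥0} (h : PositiveFormBoundedBy p a C)
    (hp : ∀ i, 0 < p i) (hsum : ∑ i, 1 / p i < 1) :
    mixedNorm (fun l => deltaExponent (Finset.Ici l) p) (fun t => a t) ≤ C := by
  induction k generalizing C with
  | zero =>
    have hC := h default default
    simp only [Fintype.piFinset_of_isEmpty, Finset.univ_unique, Finset.sum_singleton,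
      Finset.univ_eq_empty, Finset.prod_empty, mul_one] at hC
    exact ENNReal.coe_le_coe.2 (by convert hC)
  | succ k ih =>
    have hp' (i : Fin k) : 0 < Fin.tail p i := hp i.succ
    have hsum' : ∑ i, 1 / Fin.tail p i < 1 := by
      rw [Fin.sum_univ_succ] at hsum
      exact (lt_add_of_pos_left _ (one_div_pos.2 (hp 0))).trans hsum
    set d : Fin k → ℝ := fun l => deltaExponent (Finset.Ici l) (Fin.tail p)
    set r := deltaExponent Finset.univ (Fin.tail p)
    have hd : ∀ l, 1 ≤ d l := one_le_deltaExponent_Ici hp' hsum'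
    have hdr (l : Fin k) : d l ≤ r := deltaExponent_mono hp' (Finset.subset_univ _) hsum'
    have hr : 1 ≤ r := one_le_deltaExponent hp' hsum'
    rw [mixedNorm_succ, tail_deltaExponent_Ici, ← bot_eq_zero, Finset.Ici_bot]
    refine rpow_tsum_rpow_le_of_forall_mul (holderTriple_deltaExponent_univ_succ (hp 0) hsum) _
      fun F x => ?_
    rw [one_div, ENNReal.rpow_inv_le_iff (one_pos.trans_le hr)]
    calc ∑ j ∈ F, (x j * mixedNorm d fun t => a (Fin.cons j t)) ^ r
        = ∑ j ∈ F, mixedNorm d (fun t => x j * a (Fin.cons j t)) ^ r := by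
          simp_rw [mixedNorm_const_mul fun l => one_pos.trans_le (hd l)]
      _ ≤ mixedNorm d (fun t => ∑ j ∈ F, x j * a (Fin.cons j t)) ^ r :=
          sum_mixedNorm_rpow_le (antitone_deltaExponent_Ici hp' hsum') hd hr hdr _ _
      _ ≤ (C * (∑ j ∈ F, x j ^ p 0) ^ (1 / p 0) : ℝ≥0) ^ r := by
          gcongr
          exact_mod_cast ih (h.sum_cons F x) hp' hsum'

end PositiveForms

section MultilinearForms

variable {ι α : Type*} [Fintype ι] [DecidableEq ι] [DecidableEq α]

theorem nnnorm_sum_lpSingle {E : α → Type*} [∀ j, NormedAddCommGroup (E j)] {p : ℝ≥0∞}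
    [Fact (1 ≤ p)] (hp : 0 < p.toReal) (s : Finset α) (x : ∀ j, E j) :
    ‖∑ j ∈ s, lp.single p j (x j)‖₊ = (∑ j ∈ s, ‖x j‖₊ ^ p.toReal) ^ (1 / p.toReal) := by
  rw [one_div, NNReal.eq_rpow_inv_iff hp.ne']
  exact NNReal.eq (by push_cast; exact lp.norm_sum_single hp x s)

theorem multilinearMap_sum_lpSingle {𝕜 G : Type*} [NormedField 𝕜] [AddCommMonoid G] [Module 𝕜 G]
    {p : ι → ℝ≥0∞} (A : MultilinearMap 𝕜 (fun i => lp (fun _ : α => 𝕜) (p i)) G)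
    (F : ι → Finset α) (x : ι → α → 𝕜) :
    A (fun i => ∑ j ∈ F i, lp.single (p i) j (x i j)) =
      ∑ t ∈ Fintype.piFinset F, (∏ i, x i (t i)) • A fun i => lp.single (p i) (t i) 1 := by
  have hsingle (i : ι) (j : α) : lp.single (E := fun _ : α => 𝕜) (p i) j (x i j) =
      x i j • lp.single (p i) j 1 := by
    rw [← lp.single_smul, smul_eq_mul, mul_one]
  simp_rw [A.map_sum_finset, hsingle, A.map_smul_univ]

theorem positiveFormBoundedBy_nnnorm {𝕂 : Type*} [RCLike 𝕂] {p : ι → ℝ≥0∞}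
    [∀ i, Fact (1 ≤ p i)] (hp : ∀ i, p i ≠ ⊤)
    (A : ContinuousMultilinearMap 𝕂 (fun i => lp (fun _ : α => 𝕂) (p i)) 𝕂)
    {a : (ι → α) → ℝ≥0} (ha : ∀ t, A (fun i => lp.single (p i) (t i) 1) = ((a t : ℝ) : 𝕂)) :
    PositiveFormBoundedBy (fun i => (p i).toReal) a ‖A‖₊ := by
  intro F x
  have hp0 (i : ι) : 0 < (p i).toReal :=
    ENNReal.toReal_pos (one_pos.trans_le Fact.out).ne' (hp i)
  let v (i : ι) : lp (fun _ : α => 𝕂) (p i) := ∑ j ∈ F i, lp.single (p i) j ((x i j : ℝ) : 𝕂)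
  have hAv : A v = ((∑ t ∈ Fintype.piFinset F, a t * ∏ i, x i (t i) : ℝ≥0) : ℝ) := by
    rw [← ContinuousMultilinearMap.coe_coe, multilinearMap_sum_lpSingle]
    push_cast
    exact Finset.sum_congr rfl fun t _ => by
      rw [ContinuousMultilinearMap.coe_coe, ha, smul_eq_mul, mul_comm]
  calc ∑ t ∈ Fintype.piFinset F, a t * ∏ i, x i (t i) = ‖A v‖₊ := by
        rw [hAv]
        exact NNReal.eq (by rw [coe_nnnorm, RCLike.norm_ofReal, NNReal.abs_eq])
    _ ≤ ‖A‖₊ * ∏ i, ‖v i‖₊ := A.le_opNNNorm v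
    _ = ‖A‖₊ * ∏ i, (∑ j ∈ F i, x i j ^ (p i).toReal) ^ (1 / (p i).toReal) := by
        simp [v, nnnorm_sum_lpSingle (hp0 _)]

end MultilinearForms

/-- **Sharp anisotropic Hardy–Littlewood inequality for positive multilinear forms
(sufficiency).**  Let `m ≥ 1`, `p₁, …, p_m ∈ (1, ∞)` with `1/p₁ + ⋯ + 1/p_m < 1`, let
`σ` be a permutation of `{1, …, m}` and let `q₁, …, q_m ∈ (0, ∞)` satisfy
`q_k ≥ δ^{p_{σ(k)},…,p_{σ(m)}} = 1/(1 − (1/p_{σ(k)} + ⋯ + 1/p_{σ(m)}))` for all `k`.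
Then every bounded nonnegative `m`-linear form `A : ℓ_{p₁} × ⋯ × ℓ_{p_m} → 𝕂`
satisfies the anisotropic inequality
`(Σ_{j_{σ(1)}} (Σ_{j_{σ(2)}} ⋯ (Σ_{j_{σ(m)}} A(e_{j₁},…,e_{j_m})^{q_m})^{q_{m-1}/q_m} ⋯ )^{q₁/q₂})^{1/q₁} ≤ ‖A‖`. -/
theorem anisotropic_hardy_littlewood_sufficiency
    (𝕂 : Type*) [RCLike 𝕂] (m : ℕ) (hm : 0 < m)
    (p : Fin m → ℝ) (hp : ∀ i, 1 < p i)
    [∀ i, Fact (1 ≤ ENNReal.ofReal (p i))]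
    (hsum : ∑ i, 1 / p i < 1)
    (σ : Equiv.Perm (Fin m))
    (q : Fin m → ℝ) (hq : ∀ k, 0 < q k)
    (hqδ : ∀ k : Fin m, 1 / (1 - ∑ l ∈ Finset.Ici k, 1 / p (σ l)) ≤ q k)
    (A : ContinuousMultilinearMap 𝕂
      (fun i : Fin m => lp (fun _ : ℕ => 𝕂) (ENNReal.ofReal (p i))) 𝕂)
    (hA : ∀ j : Fin m → ℕ, ∃ r : ℝ, 0 ≤ r ∧
      A (fun i => lp.single (ENNReal.ofReal (p i)) (j i) 1) = (r : 𝕂)) :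
    mixedNorm q
        (fun t : Fin m → ℕ =>
          ENNReal.ofReal (RCLike.re
            (A (fun i => lp.single (ENNReal.ofReal (p i)) (t (σ.symm i)) 1))))
      ≤ ENNReal.ofReal ‖A‖ := by
  have hp0 (i : Fin m) : 0 < p i := one_pos.trans (hp i)
  have hsumσ : ∑ i, 1 / (p ∘ σ) i < 1 := (Equiv.sum_comp σ fun i => 1 / p i).trans_lt hsum
  have hδ (k : Fin m) : 0 < deltaExponent (Finset.Ici k) (p ∘ σ) :=
    one_pos.trans_le (one_le_deltaExponent_Ici (fun i => hp0 (σ i)) hsumσ k)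
  choose r hr0 hr using hA
  lift r to (Fin m → ℕ) → ℝ≥0 using hr0
  have hbound : PositiveFormBoundedBy p r ‖A‖₊ := by
    simpa only [ENNReal.toReal_ofReal (hp0 _).le] using
      positiveFormBoundedBy_nnnorm (fun _ => ENNReal.ofReal_ne_top) A hr
  simp only [hr, RCLike.ofReal_re, ENNReal.ofReal_coe_nnreal, ofReal_norm, enorm_eq_nnnorm]
  exact (mixedNorm_anti_exponent hδ hqδ _).trans
    ((hbound.comp_equiv σ).mixedNorm_deltaExponent_le (fun i => hp0 (σ i)) hsumσ)
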